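/- arXiv:2011.01610 — 3 statements merged into one kernel-verified Lean document; each statement's English description precedes it below -/
import Mathlib

section
/- Let β > 1/2 and let Y be a random variable distributed on ℝ with density g_β(x) = c_β/(1+|x|)^{2β}, c_β the normalizing constant. Then for every 1 ≤ p < ∞ and every smooth function φ on ℝ with φ(0) = 0 and E[|φ(Y)|^p] finite, E[|φ(Y)|^p] ≤ (p/(2β−1))^p E[(1+|Y|)^p |φ'(Y)|^p]. -/
open MeasureTheory Set

/-! Let `w` be a weight on `[0, ∞)` and `τ` its Mills ratio, so that `(τ w)' = -w`. If `F ≥ 0`,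
`F 0 = 0` and `F' = f`, then Young's inequality gives
`F ^ p * w - (p τ |f|) ^ p * w ≤ p F ^ p w - p F ^ (p - 1) (p τ |f|) w ≤ -p (F ^ p τ w)'`,
and integrating yields Hardy's inequality `∫ F ^ p w ≤ ∫ (p τ |f|) ^ p w` on every `[0, R]`. Since
`‖φ‖` need not be differentiable, `F` is taken to be the primitive of `‖φ'‖`, which dominates it.
For `w x = c / (1 + x) ^ (2 * β)` the Mills ratio is `τ x = (1 + x) / (2 * β - 1)`. -/

lemma mul_rpow_sub_one_mul_le {p x y : ℝ} (hp : 1 ≤ p) (hx : 0 ≤ x) (hy : 0 ≤ y) :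
    p * (x ^ (p - 1) * y) ≤ (p - 1) * x ^ p + y ^ p := by
  have hp0 : 0 < p := by positivity
  have weighted_amgm := Real.geom_mean_le_arith_mean2_weighted (w₁ := (p - 1) / p) (w₂ := 1 / p)
    (div_nonneg (sub_nonneg.2 hp) hp0.le) (by positivity)
    (Real.rpow_nonneg hx p) (Real.rpow_nonneg hy p) (by field_simp; ring)
  rw [← Real.rpow_mul hx, ← Real.rpow_mul hy, mul_div_cancel₀ _ hp0.ne',
    mul_div_cancel₀ _ hp0.ne', Real.rpow_one] at weighted_amgm
  calc p * (x ^ (p - 1) * y)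
      ≤ p * ((p - 1) / p * x ^ p + 1 / p * y ^ p) := by gcongr
    _ = (p - 1) * x ^ p + y ^ p := by field_simp

-- The right-hand side is `-p (F ^ p τ w)'` when `F' = f` and `(τ w)' = -w`.
lemma rpow_mul_sub_rpow_mul_le {p F f τ w : ℝ} (hp : 1 ≤ p) (hF : 0 ≤ F) (hτ : 0 ≤ τ)
    (hw : 0 ≤ w) :
    F ^ p * w - (p * (τ * |f|)) ^ p * w ≤
      -p * (f * p * F ^ (p - 1) * (τ * w) + F ^ p * -w) := by
  have young := mul_rpow_sub_one_mul_le hp hF (y := p * (τ * |f|)) (by positivity)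
  have hf : p * (p * F ^ (p - 1) * τ * f) ≤ p * (p * F ^ (p - 1) * τ * |f|) := by
    gcongr
    exact le_abs_self f
  calc F ^ p * w - (p * (τ * |f|)) ^ p * w
      = (F ^ p - (p * (τ * |f|)) ^ p) * w := by ring
    _ ≤ (p * F ^ p - p * (p * F ^ (p - 1) * τ * f)) * w :=
        mul_le_mul_of_nonneg_right (by linarith) hw
    _ = -p * (f * p * F ^ (p - 1) * (τ * w) + F ^ p * -w) := by ring

/-- `τ` is a Mills ratio (reciprocal hazard rate) of the weight `w` on `s`. It is encoded by the
differential equation `(τ w)' = -w`, whose solution with `τ w → 0` at infinity is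
`τ x = (∫ t in Ioi x, w t) / w x`; no such normalization is imposed. -/
structure IsMillsRatioOn (τ w : ℝ → ℝ) (s : Set ℝ) : Prop where
  continuousOn_ratio : ContinuousOn τ s
  continuousOn_weight : ContinuousOn w s
  ratio_nonneg : ∀ x ∈ s, 0 ≤ τ x
  weight_nonneg : ∀ x ∈ s, 0 ≤ w x
  hasDerivAt_mul : ∀ x ∈ interior s, HasDerivAt (fun y => τ y * w y) (-w x) x

lemma IsMillsRatioOn.mono {τ w : ℝ → ℝ} {s t : Set ℝ} (h : IsMillsRatioOn τ w t) (hst : s ⊆ t) :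
    IsMillsRatioOn τ w s where
  continuousOn_ratio := h.continuousOn_ratio.mono hst
  continuousOn_weight := h.continuousOn_weight.mono hst
  ratio_nonneg x hx := h.ratio_nonneg x (hst hx)
  weight_nonneg x hx := h.weight_nonneg x (hst hx)
  hasDerivAt_mul x hx := h.hasDerivAt_mul x (interior_mono hst hx)

section Interval

variable {E : Type*} [NormedAddCommGroup E] [NormedSpace ℝ E] {a b p : ℝ} {τ w : ℝ → ℝ}

theorem IsMillsRatioOn.integral_rpow_le_of_hasDerivAt {F f : ℝ → ℝ}
    (h : IsMillsRatioOn τ w (Icc a b)) (hab : a ≤ b) (hp : 1 ≤ p)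
    (hF : ContinuousOn F (Icc a b)) (hf : ContinuousOn f (Icc a b))
    (hFf : ∀ x ∈ Ioo a b, HasDerivAt F (f x) x)
    (hFa : F a = 0) (hF_nonneg : ∀ x ∈ Icc a b, 0 ≤ F x) :
    ∫ x in a..b, F x ^ p * w x ≤ ∫ x in a..b, (p * (τ x * |f x|)) ^ p * w x := by
  have hp0 : 0 < p := by positivity
  have hτ := h.continuousOn_ratio
  have hw := h.continuousOn_weight
  have hFp : ContinuousOn (fun x => F x ^ p) (Icc a b) :=
    hF.rpow_const fun _ _ => Or.inr hp0.le
  have hlhs : ContinuousOn (fun x => F x ^ p * w x) (Icc a b) := hFp.mul hw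
  have hrhs : ContinuousOn (fun x => (p * (τ x * |f x|)) ^ p * w x) (Icc a b) :=
    ((continuousOn_const.mul (hτ.mul hf.abs)).rpow_const fun _ _ => Or.inr hp0.le).mul hw
  have hderiv : ∀ x ∈ Ioo a b, HasDerivAt (fun y => -p * (F y ^ p * (τ y * w y)))
      (-p * (f x * p * F x ^ (p - 1) * (τ x * w x) + F x ^ p * -w x)) x := fun x hx =>
    (((hFf x hx).rpow_const (Or.inr hp)).mul
      (h.hasDerivAt_mul x (by rwa [interior_Icc]))).const_mul (-p)
  have hsub := intervalIntegral.integral_le_sub_of_hasDeriv_right_of_le hab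
    (continuousOn_const.fun_mul (hFp.fun_mul (hτ.fun_mul hw)))
    (fun x hx => (hderiv x hx).hasDerivWithinAt)
    (hlhs.fun_sub hrhs).integrableOn_Icc
    fun x hx => have hx' := Ioo_subset_Icc_self hx
      rpow_mul_sub_rpow_mul_le hp (hF_nonneg x hx') (h.ratio_nonneg x hx')
        (h.weight_nonneg x hx')
  have hb : 0 ≤ p * (F b ^ p * (τ b * w b)) :=
    have hbI := right_mem_Icc.2 hab
    mul_nonneg hp0.le <| mul_nonneg (Real.rpow_nonneg (hF_nonneg b hbI) p) <|
      mul_nonneg (h.ratio_nonneg b hbI) (h.weight_nonneg b hbI)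
  rw [intervalIntegral.integral_sub (hlhs.intervalIntegrable_of_Icc hab)
    (hrhs.intervalIntegrable_of_Icc hab), hFa, Real.zero_rpow hp0.ne'] at hsub
  linarith

theorem IsMillsRatioOn.integral_norm_rpow_le {φ : ℝ → E}
    (h : IsMillsRatioOn τ w (Icc a b)) (hab : a ≤ b) (hp : 1 ≤ p)
    (hφ : ContDiff ℝ 1 φ) (hφa : φ a = 0) :
    ∫ x in a..b, ‖φ x‖ ^ p * w x ≤ ∫ x in a..b, (p * (τ x * ‖deriv φ x‖)) ^ p * w x := by
  have hp0 : 0 ≤ p := by positivity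
  have hw := h.continuousOn_weight
  have hspeed : Continuous fun x => ‖deriv φ x‖ := (hφ.continuous_deriv le_rfl).norm
  set F : ℝ → ℝ := fun x => ∫ t in a..x, ‖deriv φ t‖
  have hF (x : ℝ) : HasDerivAt F ‖deriv φ x‖ x := hspeed.integral_hasStrictDerivAt a x |>.hasDerivAt
  have hF_cont : Continuous F := continuous_iff_continuousAt.2 fun x => (hF x).continuousAt
  have hφF : ∀ x ∈ Icc a b, ‖φ x‖ ≤ F x := fun x hx => by
    simpa [hφa] using norm_sub_le_integral_of_norm_deriv_le_of_le hx.1 hφ.continuous.continuousOn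
      (hφ.differentiable one_ne_zero).differentiableOn (.of_forall fun _ _ => le_rfl)
      (hspeed.intervalIntegrable a x)
  calc ∫ x in a..b, ‖φ x‖ ^ p * w x
      ≤ ∫ x in a..b, F x ^ p * w x := by
        refine intervalIntegral.integral_mono_on hab ?_ ?_ fun x hx =>
          mul_le_mul_of_nonneg_right (Real.rpow_le_rpow (norm_nonneg _) (hφF x hx) hp0)
            (h.weight_nonneg x hx)
        · exact ((hφ.continuous.norm.rpow_const fun _ => Or.inr hp0).continuousOn.mul
            hw).intervalIntegrable_of_Icc hab
        · exact ((hF_cont.rpow_const fun _ => Or.inr hp0).continuousOn.mul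
            hw).intervalIntegrable_of_Icc hab
    _ ≤ ∫ x in a..b, (p * (τ x * ‖deriv φ x‖)) ^ p * w x := by
        simpa only [abs_norm] using h.integral_rpow_le_of_hasDerivAt hab hp hF_cont.continuousOn
          hspeed.continuousOn (fun x _ => hF x) intervalIntegral.integral_same
          fun x hx => (norm_nonneg _).trans (hφF x hx)

end Interval

lemma continuous_norm_rpow_mul_comp_abs {E : Type*} [SeminormedAddCommGroup E] {p : ℝ} {w : ℝ → ℝ}
    {φ : ℝ → E} (hφ : Continuous φ) (hp : 0 ≤ p) (hw : ContinuousOn w (Ici 0)) :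
    Continuous fun x => ‖φ x‖ ^ p * w |x| :=
  (hφ.norm.rpow_const fun _ => Or.inr hp).mul (hw.comp_continuous continuous_abs abs_nonneg)

section Line

variable {E : Type*} [NormedAddCommGroup E] [NormedSpace ℝ E] {p R : ℝ} {τ w : ℝ → ℝ} {φ : ℝ → E}

lemma intervalIntegral_neg_self_eq_add {f : ℝ → E} (hf : LocallyIntegrable f) (R : ℝ) :
    ∫ x in -R..R, f x = (∫ x in (0 : ℝ)..R, f (-x)) + ∫ x in (0 : ℝ)..R, f x := by
  have hf_int (a b : ℝ) : IntervalIntegrable f volume a b :=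
    (hf.integrableOn_isCompact isCompact_uIcc).intervalIntegrable
  rw [intervalIntegral.integral_comp_neg, neg_zero,
    intervalIntegral.integral_add_adjacent_intervals (hf_int _ _) (hf_int _ _)]

lemma integrable_and_integral_le_of_intervalIntegral_le {f g : ℝ → ℝ}
    (hf : LocallyIntegrable f) (hf_nonneg : 0 ≤ f) (hg : Integrable g)
    (hfg : ∀ R, 0 ≤ R → ∫ x in -R..R, f x ≤ ∫ x in -R..R, g x) :
    Integrable f ∧ ∫ x, f x ≤ ∫ x, g x := by
  have g_lim :=
    intervalIntegral_tendsto_integral hg Filter.tendsto_neg_atTop_atBot Filter.tendsto_id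
  have hf_int : Integrable f := by
    obtain ⟨C, hC⟩ := g_lim.isBoundedUnder_le
    refine integrable_of_intervalIntegral_norm_bounded C (fun R =>
        (hf.integrableOn_isCompact isCompact_Icc).mono_set Ioc_subset_Icc_self)
      Filter.tendsto_neg_atTop_atBot Filter.tendsto_id ?_
    filter_upwards [Filter.eventually_ge_atTop 0, Filter.eventually_map.1 hC] with R hR hgR
    simpa only [Real.norm_of_nonneg (hf_nonneg _), id_eq] using (hfg R hR).trans hgR
  refine ⟨hf_int, le_of_tendsto_of_tendsto
    (intervalIntegral_tendsto_integral hf_int Filter.tendsto_neg_atTop_atBot Filter.tendsto_id)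
    g_lim ?_⟩
  filter_upwards [Filter.eventually_ge_atTop 0] with R hR using hfg R hR

lemma IsMillsRatioOn.continuous_rpow_mul_comp_abs (h : IsMillsRatioOn τ w (Ici 0)) (hp : 0 ≤ p)
    (hφ : ContDiff ℝ 1 φ) :
    Continuous fun x => (p * (τ |x| * ‖deriv φ x‖)) ^ p * w |x| := by
  have hτ : Continuous fun x => τ |x| :=
    h.continuousOn_ratio.comp_continuous continuous_abs abs_nonneg
  have hw : Continuous fun x => w |x| :=
    h.continuousOn_weight.comp_continuous continuous_abs abs_nonneg
  exact ((continuous_const.mul (hτ.mul (hφ.continuous_deriv le_rfl).norm)).rpow_const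
    fun _ => Or.inr hp).mul hw

theorem IsMillsRatioOn.intervalIntegral_comp_abs_le (h : IsMillsRatioOn τ w (Ici 0)) (hp : 1 ≤ p)
    (hφ : ContDiff ℝ 1 φ) (hφ0 : φ 0 = 0) (hR : 0 ≤ R) :
    ∫ x in -R..R, ‖φ x‖ ^ p * w |x| ≤
      ∫ x in -R..R, (p * (τ |x| * ‖deriv φ x‖)) ^ p * w |x| := by
  have hp0 : 0 ≤ p := by positivity
  have half {ψ : ℝ → E} (hψ : ContDiff ℝ 1 ψ) (hψ0 : ψ 0 = 0) :
      ∫ x in (0 : ℝ)..R, ‖ψ x‖ ^ p * w |x| ≤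
        ∫ x in (0 : ℝ)..R, (p * (τ |x| * ‖deriv ψ x‖)) ^ p * w |x| := by
    have habs : ∀ x ∈ uIcc 0 R, |x| = x := fun x hx => abs_of_nonneg (uIcc_of_le hR ▸ hx).1
    convert! (h.mono Icc_subset_Ici_self).integral_norm_rpow_le hR hp hψ hψ0 using 1 <;>
      exact intervalIntegral.integral_congr fun x hx => by simp only [habs x hx]
  have reflected := half (hφ.comp contDiff_neg) (by simpa using hφ0)
  simp only [Function.comp_def, deriv_comp_neg, norm_neg] at reflected
  rw [intervalIntegral_neg_self_eq_add
      (continuous_norm_rpow_mul_comp_abs hφ.continuous hp0 h.continuousOn_weight).locallyIntegrable,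
    intervalIntegral_neg_self_eq_add (h.continuous_rpow_mul_comp_abs hp0 hφ).locallyIntegrable]
  simp only [abs_neg]
  exact add_le_add reflected (half hφ hφ0)

theorem IsMillsRatioOn.integrable_and_integral_comp_abs_le (h : IsMillsRatioOn τ w (Ici 0))
    (hp : 1 ≤ p) (hφ : ContDiff ℝ 1 φ) (hφ0 : φ 0 = 0)
    (hint : Integrable fun x => (p * (τ |x| * ‖deriv φ x‖)) ^ p * w |x|) :
    Integrable (fun x => ‖φ x‖ ^ p * w |x|) ∧
      ∫ x, ‖φ x‖ ^ p * w |x| ≤ ∫ x, (p * (τ |x| * ‖deriv φ x‖)) ^ p * w |x| :=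
  integrable_and_integral_le_of_intervalIntegral_le
    (continuous_norm_rpow_mul_comp_abs hφ.continuous (by positivity)
      h.continuousOn_weight).locallyIntegrable
    (fun x => mul_nonneg (by positivity) (h.weight_nonneg _ (abs_nonneg x))) hint
    fun _ hR => h.intervalIntegral_comp_abs_le hp hφ hφ0 hR

end Line

section Pareto

variable {β c : ℝ}

lemma isMillsRatioOn_pareto (hβ : 1 / 2 < β) (hc : 0 ≤ c) :
    IsMillsRatioOn (fun x => (1 + x) / (2 * β - 1)) (fun x => c / (1 + x) ^ (2 * β)) (Ici 0) := by
  have hα : 0 < 2 * β - 1 := by linarith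
  have hpos : ∀ x ∈ Ici (0 : ℝ), 0 < 1 + x := fun x hx => add_pos_of_pos_of_nonneg one_pos hx
  refine ⟨by fun_prop, ?_, fun x hx => div_nonneg (hpos x hx).le hα.le,
    fun x hx => div_nonneg hc (Real.rpow_nonneg (hpos x hx).le _), fun x hx => ?_⟩
  · exact continuousOn_const.div
      (ContinuousOn.rpow_const (by fun_prop) fun x hx => Or.inl (hpos x hx).ne')
      fun x hx => (Real.rpow_pos_of_pos (hpos x hx) _).ne'
  · have hx1 := hpos x (interior_subset hx)
    have hlin : HasDerivAt (fun y : ℝ => 1 + y) 1 x := (hasDerivAt_id x).const_add 1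
    have hden : HasDerivAt (fun y : ℝ => (1 + y) ^ (2 * β)) _ x :=
      hlin.rpow_const (p := 2 * β) (Or.inl hx1.ne')
    convert! (hlin.div_const (2 * β - 1)).fun_mul
      ((hasDerivAt_const x c).fun_div hden (Real.rpow_pos_of_pos hx1 _).ne') using 1
    rw [Real.rpow_sub_one hx1.ne']
    field_simp
    ring

theorem wirtinger_symmetric_pareto_general {E : Type*} [NormedAddCommGroup E] [NormedSpace ℝ E]
    (hβ : 1 / 2 < β) (hc : 0 ≤ c) {p : ℝ} (hp : 1 ≤ p)
    {φ : ℝ → E} (hφ : ContDiff ℝ 1 φ) (hφ0 : φ 0 = 0)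
    (hrhs : Integrable fun x =>
      (1 + |x|) ^ p * ‖deriv φ x‖ ^ p * (c / (1 + |x|) ^ (2 * β))) :
    Integrable (fun x => ‖φ x‖ ^ p * (c / (1 + |x|) ^ (2 * β))) ∧
      ∫ x, ‖φ x‖ ^ p * (c / (1 + |x|) ^ (2 * β)) ≤
        (p / (2 * β - 1)) ^ p *
          ∫ x, (1 + |x|) ^ p * ‖deriv φ x‖ ^ p * (c / (1 + |x|) ^ (2 * β)) := by
  have hα : 0 < 2 * β - 1 := by linarith
  have hscale (x : ℝ) : (p * ((1 + |x|) / (2 * β - 1) * ‖deriv φ x‖)) ^ p =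
      (p / (2 * β - 1)) ^ p * ((1 + |x|) ^ p * ‖deriv φ x‖ ^ p) := by
    rw [← Real.mul_rpow (by positivity) (by positivity),
      ← Real.mul_rpow (by positivity) (by positivity)]
    ring_nf
  have hardy := (isMillsRatioOn_pareto hβ hc).integrable_and_integral_comp_abs_le hp hφ hφ0
  simp only [hscale, mul_assoc, integral_const_mul] at hardy hrhs ⊢
  exact hardy (hrhs.const_mul _)

end Pareto

/-- **Sharp Wirtinger inequality for the density `g_β`, functions vanishing at
the median** (inequality (4.14)). Let `β > 1/2` and let `Y` have the density
`g_β(x) = c_β/(1+|x|)^{2β}` on `ℝ`. Then for every `1 ≤ p < ∞` and every smooth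
`φ` with `φ(0) = 0` and `E[|φ(Y)|^p]` finite,
`E[|φ(Y)|^p] ≤ (p/(2β−1))^p E[(1+|Y|)^p |φ'(Y)|^p]`
(whenever the right-hand side is finite). -/
theorem wirtinger_symmetric_pareto
    (β : ℝ) (hβ : 1 / 2 < β)
    (c : ℝ) (hc : 0 < c)
    (hnorm : ∫ x : ℝ, c / (1 + |x|) ^ (2 * β) = 1)
    (p : ℝ) (hp : 1 ≤ p)
    (φ : ℝ → ℝ) (hφ : ContDiff ℝ (⊤ : ℕ∞) φ) (hφ0 : φ 0 = 0)
    (hlhs : Integrable (fun x => |φ x| ^ p * (c / (1 + |x|) ^ (2 * β))))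
    (hrhs : Integrable (fun x =>
      (1 + |x|) ^ p * |deriv φ x| ^ p * (c / (1 + |x|) ^ (2 * β)))) :
    (∫ x : ℝ, |φ x| ^ p * (c / (1 + |x|) ^ (2 * β)))
      ≤ (p / (2 * β - 1)) ^ p *
          ∫ x : ℝ, (1 + |x|) ^ p * |deriv φ x| ^ p * (c / (1 + |x|) ^ (2 * β)) :=
  (wirtinger_symmetric_pareto_general hβ hc.le hp (hφ.of_le (mod_cast le_top)) hφ0 hrhs).2
end

section
/- Let β > 1/2, m > 0, let X be a random variable distributed on ℝ₊ with the inverse Gamma density h_{β,m}(x) = C_{β,m} x^{−2β} e^{−m/x}, and let x̄_{β,m} denote the median of X. Then for every 1 ≤ p < ∞ and every smooth function φ on ℝ₊ with E[|φ(X)|^p] finite, E[|φ(X) − E[φ(X)]|^p] ≤ (p D(β,m))^p E[X^p |φ'(X)|^p], where D(β,m) = 1/(x̄_{β,m} · h_{β,m}(x̄_{β,m})). -/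
open MeasureTheory Set

/-!
If `X > 0` has density `h` and distribution function `H`, and the density of `log X` is
log-concave, then `x ↦ h (x * s) / h x` is antitone for each `s ≥ 1` and monotone for each
`s ≤ 1`. Integrating in `s` over `(0, 1)` and over `(1, ∞)` shows that `H x / (x * h x)` is
monotone and `(1 - H x) / (x * h x)` antitone. Both equal `1 / (2 * c * h c)` at the median `c`,
so `H x ≤ x * h x / (2 * c * h c)` to the left of `c` and `1 - H x ≤ x * h x / (2 * c * h c)` to
the right of it.

On either side of `c`, integrating `|φ - φ c| ^ p * h` by parts, inserting these bounds and
absorbing one factor by Young's inequality gives a Hardy inequality with constant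
`p / (2 * c * h c)`. Replacing `φ c` by the mean of `φ` at most doubles the `L^p` norm, which
cancels the `2`.

The inverse Gamma density qualifies because its ratio is
`s ^ (-(2 * β)) * exp (m * (1 - s⁻¹) / x)`, with `m * (1 - s⁻¹) ≥ 0` for `s ≥ 1`.
-/

open Filter
open scoped ENNReal

theorem mul_rpow_sub_one_mul_le_s15 {p a b : ℝ} (hp : 1 ≤ p) (ha : 0 ≤ a) (hb : 0 ≤ b) :
    p * (a ^ (p - 1) * b) ≤ (p - 1) * a ^ p + b ^ p := by
  have hp0 : 0 < p := by linarith
  have amgm := Real.geom_mean_le_arith_mean2_weighted (div_nonneg (sub_nonneg.2 hp) hp0.le)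
    (one_div_nonneg.2 hp0.le) (Real.rpow_nonneg ha p) (Real.rpow_nonneg hb p)
    (by field_simp; ring)
  rw [← Real.rpow_mul ha, ← Real.rpow_mul hb, mul_div_cancel₀ _ hp0.ne', mul_div_cancel₀ _ hp0.ne',
    Real.rpow_one] at amgm
  calc p * (a ^ (p - 1) * b) ≤ p * ((p - 1) / p * a ^ p + 1 / p * b ^ p) := by gcongr
    _ = (p - 1) * a ^ p + b ^ p := by field_simp

theorem mul_mul_rpow_sub_one_mul_le_of_le {p v g q w t : ℝ} (hp : 1 ≤ p) (hv : 0 ≤ v) (hg : 0 ≤ g)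
    (hq : 0 ≤ q) (hw : 0 ≤ w) (ht : t ≤ q * w) :
    p * (g * p * v ^ (p - 1) * t) ≤ (p - 1) * (v ^ p * w) + p ^ p * ((q * g) ^ p * w) := by
  have hp0 : 0 ≤ p := by linarith
  calc p * (g * p * v ^ (p - 1) * t)
      ≤ p * (g * p * v ^ (p - 1) * (q * w)) := by gcongr
    _ = p * (v ^ (p - 1) * (p * (q * g))) * w := by ring
    _ ≤ ((p - 1) * v ^ p + (p * (q * g)) ^ p) * w := by
      gcongr
      exact mul_rpow_sub_one_mul_le_s15 hp hv (by positivity)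
    _ = (p - 1) * (v ^ p * w) + p ^ p * ((q * g) ^ p * w) := by
      rw [Real.mul_rpow hp0 (by positivity)]; ring

section Hardy

variable {p a b : ℝ} {w q : ℝ → ℝ}

theorem integral_mul_eq_integral_deriv_mul_integral_tail {u u' : ℝ → ℝ} (hab : a ≤ b)
    (hu : ContinuousOn u (Icc a b)) (hua : u a = 0) (huu' : ∀ x ∈ Ioo a b, HasDerivAt u (u' x) x)
    (hu' : IntervalIntegrable u' volume a b) (hw : ContinuousOn w (Icc a b)) :
    ∫ x in a..b, u x * w x = ∫ x in a..b, u' x * ∫ y in x..b, w y := by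
  have hIcc : uIcc a b = Icc a b := uIcc_of_le hab
  have htail : ∀ x ∈ Ioo a b, HasDerivAt (fun x ↦ ∫ y in x..b, w y) (-w x) x := fun x hx ↦
    intervalIntegral.integral_hasDerivAt_left
      (hw.mono (uIcc_subset_Icc (Ioo_subset_Icc_self hx) (right_mem_Icc.2 hab))).intervalIntegrable
      ((hw.mono Ioo_subset_Icc_self).stronglyMeasurableAtFilter isOpen_Ioo x hx)
      (hw.continuousAt (Icc_mem_nhds hx.1 hx.2))
  have hparts := intervalIntegral.integral_mul_deriv_eq_deriv_mul_of_hasDerivAt (hIcc ▸ hu)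
    (intervalIntegral.continuousOn_primitive_interval_left (hIcc ▸ hw.integrableOn_Icc))
    (fun x hx ↦ huu' x (by simpa [hab] using hx)) (fun x hx ↦ htail x (by simpa [hab] using hx))
    hu' (hIcc ▸ hw.neg : ContinuousOn _ (uIcc a b)).intervalIntegrable
  simpa [hua] using hparts

theorem integral_rpow_mul_le_of_integral_le {v g : ℝ → ℝ} (hp : 1 ≤ p) (hab : a ≤ b)
    (hv : ContinuousOn v (Icc a b)) (hv0 : ∀ x ∈ Icc a b, 0 ≤ v x) (hva : v a = 0)
    (hvg : ∀ x ∈ Ioo a b, HasDerivAt v (g x) x)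
    (hg : ContinuousOn g (Icc a b)) (hg0 : ∀ x ∈ Icc a b, 0 ≤ g x)
    (hw : ContinuousOn w (Icc a b)) (hw0 : ∀ x ∈ Icc a b, 0 ≤ w x)
    (hq : ContinuousOn q (Icc a b)) (hq0 : ∀ x ∈ Icc a b, 0 ≤ q x)
    (htail : ∀ x ∈ Icc a b, ∫ y in x..b, w y ≤ q x * w x) :
    ∫ x in a..b, v x ^ p * w x ≤ p ^ p * ∫ x in a..b, (q x * g x) ^ p * w x := by
  have hp0 : 0 < p := by linarith
  have hu : uIcc a b = Icc a b := uIcc_of_le hab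
  have hint {f : ℝ → ℝ} (hf : ContinuousOn f (Icc a b)) : IntervalIntegrable f volume a b :=
    (hu ▸ hf : ContinuousOn f (uIcc a b)).intervalIntegrable
  have hvr {r : ℝ} (hr : 0 ≤ r) : ContinuousOn (fun x ↦ v x ^ r) (Icc a b) :=
    hv.rpow_const fun _ _ ↦ Or.inr hr
  have hgv : ContinuousOn (fun x ↦ g x * p * v x ^ (p - 1)) (Icc a b) :=
    (hg.mul continuousOn_const).mul (hvr (sub_nonneg.2 hp))
  have hT : ContinuousOn (fun x ↦ ∫ y in x..b, w y) (Icc a b) :=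
    hu ▸ intervalIntegral.continuousOn_primitive_interval_left (hu ▸ hw.integrableOn_Icc)
  have hV : IntervalIntegrable (fun x ↦ v x ^ p * w x) volume a b := hint ((hvr hp0.le).mul hw)
  have hG : IntervalIntegrable (fun x ↦ (q x * g x) ^ p * w x) volume a b :=
    hint (((hq.mul hg).rpow_const fun _ _ ↦ Or.inr hp0.le).mul hw)
  have absorb : p * ∫ x in a..b, v x ^ p * w x ≤
      (p - 1) * (∫ x in a..b, v x ^ p * w x) +
        p ^ p * ∫ x in a..b, (q x * g x) ^ p * w x := by
    calc p * ∫ x in a..b, v x ^ p * w x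
        = ∫ x in a..b, p * (g x * p * v x ^ (p - 1) * ∫ y in x..b, w y) := by
          rw [intervalIntegral.integral_const_mul,
            integral_mul_eq_integral_deriv_mul_integral_tail hab (hvr hp0.le)
              (by rw [hva, Real.zero_rpow hp0.ne'])
              (fun x hx ↦ (hvg x hx).rpow_const (Or.inr hp)) (hint hgv) hw]
      _ ≤ ∫ x in a..b, ((p - 1) * (v x ^ p * w x) + p ^ p * ((q x * g x) ^ p * w x)) :=
          intervalIntegral.integral_mono_on hab (hint (continuousOn_const.mul (hgv.mul hT)))
            ((hV.const_mul _).add (hG.const_mul _)) fun x hx ↦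
              mul_mul_rpow_sub_one_mul_le_of_le hp (hv0 x hx) (hg0 x hx) (hq0 x hx) (hw0 x hx)
                (htail x hx)
      _ = _ := by
          rw [intervalIntegral.integral_add (hV.const_mul _) (hG.const_mul _),
            intervalIntegral.integral_const_mul, intervalIntegral.integral_const_mul]
  linarith

variable {f f' : ℝ → ℝ}

theorem integral_abs_sub_left_rpow_mul_le (hp : 1 ≤ p) (hab : a ≤ b)
    (hf : ∀ x ∈ Icc a b, HasDerivAt f (f' x) x) (hf' : ContinuousOn f' (Icc a b))
    (hw : ContinuousOn w (Icc a b)) (hw0 : ∀ x ∈ Icc a b, 0 ≤ w x)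
    (hq : ContinuousOn q (Icc a b)) (hq0 : ∀ x ∈ Icc a b, 0 ≤ q x)
    (htail : ∀ x ∈ Icc a b, ∫ y in x..b, w y ≤ q x * w x) :
    ∫ x in a..b, |f x - f a| ^ p * w x ≤ p ^ p * ∫ x in a..b, (q x * |f' x|) ^ p * w x := by
  have hp0 : 0 ≤ p := by linarith
  have hu : uIcc a b = Icc a b := uIcc_of_le hab
  have hsub {x : ℝ} (hx : x ∈ Icc a b) : uIcc a x ⊆ Icc a b :=
    uIcc_subset_Icc (left_mem_Icc.2 hab) hx
  have hfc : ContinuousOn f (Icc a b) := fun x hx ↦ (hf x hx).continuousAt.continuousWithinAt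
  have hvc : ContinuousOn (fun x ↦ ∫ t in a..x, |f' t|) (Icc a b) :=
    hu ▸ intervalIntegral.continuousOn_primitive_interval (hu ▸ hf'.abs.integrableOn_Icc)
  have hfv : ∀ x ∈ Icc a b, |f x - f a| ≤ ∫ t in a..x, |f' t| := fun x hx ↦ by
    rw [← intervalIntegral.integral_eq_sub_of_hasDerivAt (fun y hy ↦ hf y (hsub hx hy))
      (hf'.mono (hsub hx)).intervalIntegrable]
    exact intervalIntegral.abs_integral_le_integral_abs hx.1
  refine le_trans (intervalIntegral.integral_mono_on hab ?_ ?_ fun x hx ↦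
    mul_le_mul_of_nonneg_right (Real.rpow_le_rpow (abs_nonneg _) (hfv x hx) hp0) (hw0 x hx))
    (integral_rpow_mul_le_of_integral_le hp hab hvc (fun x hx ↦ (abs_nonneg _).trans (hfv x hx))
      intervalIntegral.integral_same (fun x hx ↦ ?_) hf'.abs (fun _ _ ↦ abs_nonneg _)
      hw hw0 hq hq0 htail)
  · refine ContinuousOn.intervalIntegrable (hu ▸ ?_)
    exact ((hfc.sub continuousOn_const).abs.rpow_const fun _ _ ↦ Or.inr hp0).mul hw
  · exact ContinuousOn.intervalIntegrable (hu ▸ (hvc.rpow_const fun _ _ ↦ Or.inr hp0).mul hw)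
  · exact intervalIntegral.integral_hasDerivAt_right
      (hf'.abs.mono (hsub (Ioo_subset_Icc_self hx))).intervalIntegrable
      ((hf'.abs.mono Ioo_subset_Icc_self).stronglyMeasurableAtFilter isOpen_Ioo x hx)
      (hf'.abs.continuousAt (Icc_mem_nhds hx.1 hx.2))

theorem integral_abs_sub_right_rpow_mul_le (hp : 1 ≤ p) (hab : a ≤ b)
    (hf : ∀ x ∈ Icc a b, HasDerivAt f (f' x) x) (hf' : ContinuousOn f' (Icc a b))
    (hw : ContinuousOn w (Icc a b)) (hw0 : ∀ x ∈ Icc a b, 0 ≤ w x)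
    (hq : ContinuousOn q (Icc a b)) (hq0 : ∀ x ∈ Icc a b, 0 ≤ q x)
    (hhead : ∀ x ∈ Icc a b, ∫ y in a..x, w y ≤ q x * w x) :
    ∫ x in a..b, |f x - f b| ^ p * w x ≤ p ^ p * ∫ x in a..b, (q x * |f' x|) ^ p * w x := by
  have hneg : MapsTo Neg.neg (Icc (-b) (-a)) (Icc a b) := fun x hx ↦
    ⟨le_neg.1 hx.2, neg_le.1 hx.1⟩
  have reflected := integral_abs_sub_left_rpow_mul_le (f := fun x ↦ f (-x))
    (f' := fun x ↦ -f' (-x)) hp (neg_le_neg hab)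
    (fun x hx ↦ by simpa [Function.comp_def] using (hf (-x) (hneg hx)).scomp x (hasDerivAt_neg x))
    (hf'.comp continuousOn_neg hneg).neg
    (hw.comp continuousOn_neg hneg) (fun x hx ↦ hw0 _ (hneg hx))
    (hq.comp continuousOn_neg hneg) (fun x hx ↦ hq0 _ (hneg hx))
    (fun x hx ↦ by simpa using hhead _ (hneg hx))
  simpa [intervalIntegral.integral_comp_neg (fun x ↦ |f x - f b| ^ p * w x),
    intervalIntegral.integral_comp_neg (fun x ↦ (q x * |f' x|) ^ p * w x)] using reflected

theorem integrableOn_Ioi_and_setIntegral_le_of_forall_Ioc {l c : ℝ} {g G : ℝ → ℝ} (hlc : l < c)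
    (hg : ContinuousOn g (Ioi l)) (hg0 : ∀ x ∈ Ioi l, 0 ≤ g x) (hG : IntegrableOn G (Ioi l))
    (hle : ∀ r ∈ Ioo l c, ∀ R ∈ Ioi c, ∫ x in r..R, g x ≤ ∫ x in r..R, G x) :
    IntegrableOn g (Ioi l) ∧ ∫ x in Ioi l, g x ≤ ∫ x in Ioi l, G x := by
  obtain ⟨r, -, hr, hrl⟩ := exists_seq_strictAnti_tendsto' hlc
  let R (n : ℕ) : ℝ := c + 1 + n
  have hR (n : ℕ) : R n ∈ Ioi c := by
    have : (0 : ℝ) ≤ n := n.cast_nonneg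
    simp only [R, mem_Ioi]; linarith
  have hRtop : Tendsto R atTop atTop :=
    tendsto_atTop_add_const_left _ _ tendsto_natCast_atTop_atTop
  have cover : AECover (volume.restrict (Ioi l)) atTop fun n ↦ Ioc (r n) (R n) :=
    (aecover_Ioi_of_Ioi hrl).inter (aecover_Iic hRtop).restrict
  have hrestrict (F : ℝ → ℝ) (n : ℕ) :
      ∫ x in Ioc (r n) (R n), F x ∂volume.restrict (Ioi l) = ∫ x in r n..R n, F x := by
    have hsub : Ioc (r n) (R n) ⊆ Ioi l := fun x hx ↦ (hr n).1.trans hx.1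
    rw [Measure.restrict_restrict_of_subset hsub,
      intervalIntegral.integral_of_le ((hr n).2.trans (hR n)).le]
  have hle' (n : ℕ) : ∫ x in Ioc (r n) (R n), g x ∂volume.restrict (Ioi l) ≤
      ∫ x in Ioc (r n) (R n), G x ∂volume.restrict (Ioi l) := by
    rw [hrestrict, hrestrict]; exact hle _ (hr n) _ (hR n)
  have hGlim := cover.integral_tendsto_of_countably_generated hG
  have hgint : IntegrableOn g (Ioi l) := by
    refine cover.integrable_of_integral_bounded_of_nonneg_ae _ (fun n ↦ ?_)
      (ae_restrict_of_forall_mem measurableSet_Ioi hg0)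
      ((hGlim.eventually_le_const (lt_add_one _)).mono fun n hn ↦ (hle' n).trans hn)
    exact (((hg.mono fun x hx ↦ (hr n).1.trans_le hx.1).integrableOn_Icc).mono_set
      Ioc_subset_Icc_self).mono_measure Measure.restrict_le_self
  exact ⟨hgint, le_of_tendsto_of_tendsto' (cover.integral_tendsto_of_countably_generated hgint)
    hGlim hle'⟩

theorem integral_abs_sub_rpow_mul_le {c : ℝ} (hp : 1 ≤ p) (hac : a ≤ c) (hcb : c ≤ b)
    (hf : ∀ x ∈ Icc a b, HasDerivAt f (f' x) x) (hf' : ContinuousOn f' (Icc a b))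
    (hw : ContinuousOn w (Icc a b)) (hw0 : ∀ x ∈ Icc a b, 0 ≤ w x)
    (hq : ContinuousOn q (Icc a b)) (hq0 : ∀ x ∈ Icc a b, 0 ≤ q x)
    (hhead : ∀ x ∈ Icc a c, ∫ y in a..x, w y ≤ q x * w x)
    (htail : ∀ x ∈ Icc c b, ∫ y in x..b, w y ≤ q x * w x) :
    ∫ x in a..b, |f x - f c| ^ p * w x ≤ p ^ p * ∫ x in a..b, (q x * |f' x|) ^ p * w x := by
  have hp0 : 0 ≤ p := by linarith
  have hl : Icc a c ⊆ Icc a b := Icc_subset_Icc_right hcb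
  have hr : Icc c b ⊆ Icc a b := Icc_subset_Icc_left hac
  have hint {g : ℝ → ℝ} (hg : ContinuousOn g (Icc a b)) {s t : ℝ} (hst : s ≤ t)
      (hsub : Icc s t ⊆ Icc a b) : IntervalIntegrable g volume s t :=
    (uIcc_of_le hst ▸ hg.mono hsub : ContinuousOn g (uIcc s t)).intervalIntegrable
  have hfc : ContinuousOn f (Icc a b) := fun x hx ↦ (hf x hx).continuousAt.continuousWithinAt
  have hdev : ContinuousOn (fun x ↦ |f x - f c| ^ p * w x) (Icc a b) :=
    ((hfc.sub continuousOn_const).abs.rpow_const fun _ _ ↦ Or.inr hp0).mul hw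
  have hbound : ContinuousOn (fun x ↦ (q x * |f' x|) ^ p * w x) (Icc a b) :=
    ((hq.mul hf'.abs).rpow_const fun _ _ ↦ Or.inr hp0).mul hw
  rw [← intervalIntegral.integral_add_adjacent_intervals (hint hdev hac hl) (hint hdev hcb hr),
    ← intervalIntegral.integral_add_adjacent_intervals (hint hbound hac hl) (hint hbound hcb hr),
    mul_add]
  exact add_le_add
    (integral_abs_sub_right_rpow_mul_le hp hac (fun x hx ↦ hf x (hl hx)) (hf'.mono hl)
      (hw.mono hl) (fun x hx ↦ hw0 x (hl hx)) (hq.mono hl) (fun x hx ↦ hq0 x (hl hx)) hhead)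
    (integral_abs_sub_left_rpow_mul_le hp hcb (fun x hx ↦ hf x (hr hx)) (hf'.mono hr)
      (hw.mono hr) (fun x hx ↦ hw0 x (hr hx)) (hq.mono hr) (fun x hx ↦ hq0 x (hr hx)) htail)

theorem integrableOn_abs_sub_rpow_mul_and_setIntegral_le {l c : ℝ} (hp : 1 ≤ p) (hlc : l < c)
    (hf : ∀ x ∈ Ioi l, HasDerivAt f (f' x) x) (hf' : ContinuousOn f' (Ioi l))
    (hw : ContinuousOn w (Ioi l)) (hw0 : ∀ x ∈ Ioi l, 0 ≤ w x) (hwi : IntegrableOn w (Ioi l))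
    (hq : ContinuousOn q (Ioi l)) (hq0 : ∀ x ∈ Ioi l, 0 ≤ q x)
    (hhead : ∀ x ∈ Ioc l c, ∫ y in Ioc l x, w y ≤ q x * w x)
    (htail : ∀ x ∈ Ici c, ∫ y in Ioi x, w y ≤ q x * w x)
    (hint : IntegrableOn (fun x ↦ (q x * |f' x|) ^ p * w x) (Ioi l)) :
    IntegrableOn (fun x ↦ |f x - f c| ^ p * w x) (Ioi l) ∧
      ∫ x in Ioi l, |f x - f c| ^ p * w x ≤
        p ^ p * ∫ x in Ioi l, (q x * |f' x|) ^ p * w x := by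
  have hp0 : 0 ≤ p := by linarith
  have hfc : ContinuousOn f (Ioi l) := fun x hx ↦ (hf x hx).continuousAt.continuousWithinAt
  have hdev : ContinuousOn (fun x ↦ |f x - f c| ^ p * w x) (Ioi l) :=
    ((hfc.sub continuousOn_const).abs.rpow_const fun _ _ ↦ Or.inr hp0).mul hw
  rw [← integral_const_mul]
  refine integrableOn_Ioi_and_setIntegral_le_of_forall_Ioc hlc hdev
    (fun x hx ↦ mul_nonneg (by positivity) (hw0 x hx)) (hint.const_mul _) fun r hr R hR ↦ ?_
  have hrR : Icc r R ⊆ Ioi l := fun x hx ↦ hr.1.trans_le hx.1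
  have hlx {x : ℝ} (hx : x ∈ Ici c) : l < x := hlc.trans_le hx
  rw [intervalIntegral.integral_const_mul]
  refine integral_abs_sub_rpow_mul_le hp hr.2.le (le_of_lt hR) (fun x hx ↦ hf x (hrR hx))
    (hf'.mono hrR) (hw.mono hrR) (fun x hx ↦ hw0 x (hrR hx)) (hq.mono hrR)
    (fun x hx ↦ hq0 x (hrR hx)) (fun x hx ↦ ?_) fun x hx ↦ ?_
  · rw [intervalIntegral.integral_of_le hx.1]
    exact (setIntegral_mono_set (hwi.mono_set Ioc_subset_Ioi_self)
      (ae_restrict_of_forall_mem measurableSet_Ioc fun y hy ↦ hw0 y hy.1)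
      (Ioc_subset_Ioc_left hr.1.le).eventuallyLE).trans (hhead x ⟨hr.1.trans_le hx.1, hx.2⟩)
  · rw [intervalIntegral.integral_of_le hx.2]
    exact (setIntegral_mono_set (hwi.mono_set (Ioi_subset_Ioi (hlx hx.1).le))
      (ae_restrict_of_forall_mem measurableSet_Ioi fun y hy ↦
        hw0 y ((hlx hx.1).trans (mem_Ioi.1 hy)))
      Ioc_subset_Ioi_self.eventuallyLE).trans (htail x hx.1)

end Hardy

section Centering

variable {Ω : Type*} {mΩ : MeasurableSpace Ω} {μ : Measure Ω}

theorem eLpNorm_sub_integral_le {E : Type*} [NormedAddCommGroup E] [NormedSpace ℝ E]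
    [CompleteSpace E] [IsProbabilityMeasure μ] {p : ℝ≥0∞} (hp : 1 ≤ p) {f : Ω → E}
    (hf : Integrable f μ) (c : E) :
    eLpNorm (fun x ↦ f x - ∫ y, f y ∂μ) p μ ≤ 2 * eLpNorm (fun x ↦ f x - c) p μ := by
  have hfc : AEStronglyMeasurable (fun x ↦ f x - c) μ := hf.1.sub aestronglyMeasurable_const
  have hmean : ∫ x, (f x - c) ∂μ = (∫ x, f x ∂μ) - c := by
    simp [integral_sub hf (integrable_const c)]
  calc eLpNorm (fun x ↦ f x - ∫ y, f y ∂μ) p μ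
      = eLpNorm ((fun x ↦ f x - c) - fun _ ↦ ∫ y, (f y - c) ∂μ) p μ := by
        congr 1; ext x; simp [hmean]
    _ ≤ eLpNorm (fun x ↦ f x - c) p μ + eLpNorm (fun _ ↦ ∫ y, (f y - c) ∂μ) p μ :=
        eLpNorm_sub_le hfc aestronglyMeasurable_const hp
    _ ≤ eLpNorm (fun x ↦ f x - c) p μ + eLpNorm (fun x ↦ f x - c) 1 μ := by
        gcongr
        rw [eLpNorm_const _ (zero_lt_one.trans_le hp).ne' (IsProbabilityMeasure.ne_zero μ),
          eLpNorm_one_eq_lintegral_enorm]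
        simpa using enorm_integral_le_lintegral_enorm _
    _ ≤ eLpNorm (fun x ↦ f x - c) p μ + eLpNorm (fun x ↦ f x - c) p μ := by
        gcongr
        exact eLpNorm_le_eLpNorm_of_exponent_le hp hfc
    _ = 2 * eLpNorm (fun x ↦ f x - c) p μ := (two_mul _).symm

theorem integral_abs_rpow_eq_lpNorm_rpow {p : ℝ} (hp : 0 < p) {f : Ω → ℝ}
    (hf : AEStronglyMeasurable f μ) :
    ∫ x, |f x| ^ p ∂μ = lpNorm f (ENNReal.ofReal p) μ ^ p := by
  rw [lpNorm_eq_integral_norm_rpow_toReal (by simpa using hp) ENNReal.ofReal_ne_top hf,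
    ENNReal.toReal_ofReal hp.le, Real.rpow_inv_rpow (by positivity) hp.ne']
  rfl

theorem memLp_ofReal_iff_integrable_abs_rpow {p : ℝ} (hp : 0 < p) {f : Ω → ℝ}
    (hf : AEStronglyMeasurable f μ) :
    MemLp f (ENNReal.ofReal p) μ ↔ Integrable (fun x ↦ |f x| ^ p) μ := by
  rw [← integrable_norm_rpow_iff hf (by simpa using hp) ENNReal.ofReal_ne_top,
    ENNReal.toReal_ofReal hp.le]
  rfl

theorem integral_abs_sub_integral_rpow_le [IsProbabilityMeasure μ] {p : ℝ} (hp : 1 ≤ p)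
    {f : Ω → ℝ} (hf : MemLp f (ENNReal.ofReal p) μ) (c : ℝ) :
    ∫ x, |f x - ∫ y, f y ∂μ| ^ p ∂μ ≤ 2 ^ p * ∫ x, |f x - c| ^ p ∂μ := by
  have hp0 : 0 < p := by linarith
  have hp' : 1 ≤ ENNReal.ofReal p := ENNReal.one_le_ofReal.2 hp
  have hfc (d : ℝ) : MemLp (fun x ↦ f x - d) (ENNReal.ofReal p) μ := hf.sub (memLp_const d)
  have hlp : lpNorm (fun x ↦ f x - ∫ y, f y ∂μ) (ENNReal.ofReal p) μ ≤
      2 * lpNorm (fun x ↦ f x - c) (ENNReal.ofReal p) μ := by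
    have := ENNReal.toReal_mono (ENNReal.mul_ne_top (by simp) (hfc c).eLpNorm_ne_top)
      (eLpNorm_sub_integral_le hp' (hf.integrable hp') c)
    simpa [toReal_eLpNorm (hfc _).1] using this
  rw [integral_abs_rpow_eq_lpNorm_rpow hp0 (hfc _).1,
    integral_abs_rpow_eq_lpNorm_rpow hp0 (hfc c).1, ← Real.mul_rpow zero_le_two lpNorm_nonneg]
  exact Real.rpow_le_rpow lpNorm_nonneg hlp hp0.le

end Centering

section Density

variable {Ω : Type*} {mΩ : MeasurableSpace Ω} {μ : Measure Ω} {w g : Ω → ℝ}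

theorem integral_withDensity_ofReal (hw : AEMeasurable w μ) (hw0 : 0 ≤ᵐ[μ] w) (g : Ω → ℝ) :
    ∫ x, g x ∂μ.withDensity (fun x ↦ ENNReal.ofReal (w x)) = ∫ x, g x * w x ∂μ := by
  rw [integral_withDensity_eq_integral_toReal_smul₀ hw.ennreal_ofReal (by simp)]
  refine integral_congr_ae (hw0.mono fun x hx ↦ ?_)
  simp [ENNReal.toReal_ofReal hx, mul_comm]

theorem integrable_withDensity_ofReal_iff (hw : AEMeasurable w μ) (hw0 : 0 ≤ᵐ[μ] w) :
    Integrable g (μ.withDensity fun x ↦ ENNReal.ofReal (w x)) ↔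
      Integrable (fun x ↦ g x * w x) μ := by
  rw [integrable_withDensity_iff_integrable_smul₀' hw.ennreal_ofReal (by simp)]
  refine integrable_congr (hw0.mono fun x hx ↦ ?_)
  simp [ENNReal.toReal_ofReal hx, mul_comm]

theorem isProbabilityMeasure_withDensity_ofReal (hw0 : 0 ≤ᵐ[μ] w) (hw1 : ∫ x, w x ∂μ = 1) :
    IsProbabilityMeasure (μ.withDensity fun x ↦ ENNReal.ofReal (w x)) where
  measure_univ := by
    rw [withDensity_apply _ MeasurableSet.univ, Measure.restrict_univ,
      ← ofReal_integral_eq_lintegral_ofReal (integrable_of_integral_eq_one hw1) hw0, hw1,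
      ENNReal.ofReal_one]

theorem integrable_and_integral_abs_sub_mean_rpow_mul_le (hw0 : 0 ≤ᵐ[μ] w) (hw1 : ∫ x, w x ∂μ = 1)
    (hg : AEStronglyMeasurable g μ) {p : ℝ} (hp : 1 ≤ p) (c : ℝ)
    (hint : Integrable (fun x ↦ |g x - c| ^ p * w x) μ) :
    Integrable (fun x ↦ |g x| ^ p * w x) μ ∧
      ∫ x, |g x - ∫ y, g y * w y ∂μ| ^ p * w x ∂μ ≤ 2 ^ p * ∫ x, |g x - c| ^ p * w x ∂μ := by
  have hp0 : 0 < p := by linarith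
  have hw : AEMeasurable w μ := (integrable_of_integral_eq_one hw1).aemeasurable
  let P := μ.withDensity fun x ↦ ENNReal.ofReal (w x)
  have : IsProbabilityMeasure P := isProbabilityMeasure_withDensity_ofReal hw0 hw1
  have hgP : AEStronglyMeasurable g P := hg.mono_ac (withDensity_absolutelyContinuous _ _)
  have hdev : MemLp (fun x ↦ g x - c) (ENNReal.ofReal p) P :=
    (memLp_ofReal_iff_integrable_abs_rpow hp0 (hgP.sub aestronglyMeasurable_const)).2
      ((integrable_withDensity_ofReal_iff hw hw0).2 hint)
  have hgLp : MemLp g (ENNReal.ofReal p) P := by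
    simpa [Pi.add_def] using hdev.add (memLp_const c)
  have centred := integral_abs_sub_integral_rpow_le hp hgLp c
  simp only [P, integral_withDensity_ofReal hw hw0] at centred
  exact ⟨(integrable_withDensity_ofReal_iff hw hw0).1
    ((memLp_ofReal_iff_integrable_abs_rpow hp0 hgP).1 hgLp), centred⟩

end Density

section DilationRatio

/-- The multiplicative form of log-concavity: for `h` positive and continuous on `(0, ∞)` this says
that `u ↦ log (h (exp u))` is concave, i.e. that the logarithm of a variable with density `h` has
a log-concave density. It compares the mass of `h` on either side of a point with the value of
`h` there, without differentiating `h`. -/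
def HasAntitoneDilationRatio (h : ℝ → ℝ) : Prop :=
  ∀ ⦃s : ℝ⦄, 1 ≤ s → AntitoneOn (fun x ↦ h (x * s) / h x) (Ioi 0)

variable {h : ℝ → ℝ}

theorem HasAntitoneDilationRatio.monotoneOn_of_le_one (hr : HasAntitoneDilationRatio h) {s : ℝ}
    (hpos : ∀ x ∈ Ioi 0, 0 < h x) (hs0 : 0 < s) (hs1 : s ≤ 1) :
    MonotoneOn (fun x ↦ h (x * s) / h x) (Ioi 0) := fun x hx y hy hxy ↦ by
  have hxs : x * s ∈ Ioi (0 : ℝ) := mul_pos hx hs0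
  have hys : y * s ∈ Ioi (0 : ℝ) := mul_pos hy hs0
  have hinv := hr ((one_le_inv₀ hs0).2 hs1) hxs hys (mul_le_mul_of_nonneg_right hxy hs0.le)
  simp only [mul_inv_cancel_right₀ hs0.ne'] at hinv
  simpa only [inv_div] using inv_anti₀ (div_pos (hpos y hy) (hpos _ hys)) hinv

theorem HasAntitoneDilationRatio.monotoneOn_setIntegral_Ioc_div (hr : HasAntitoneDilationRatio h)
    (hpos : ∀ x ∈ Ioi 0, 0 < h x) (hint : IntegrableOn h (Ioi 0)) :
    MonotoneOn (fun x ↦ (∫ y in Ioc 0 x, h y) / (x * h x)) (Ioi 0) := by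
  have hii {x : ℝ} (hx : x ∈ Ioi (0 : ℝ)) : IntervalIntegrable h volume 0 x :=
    (intervalIntegrable_iff_integrableOn_Ioc_of_le (le_of_lt hx)).2
      (hint.mono_set Ioc_subset_Ioi_self)
  have hratio {x : ℝ} (hx : x ∈ Ioi (0 : ℝ)) :
      (∫ y in Ioc 0 x, h y) / (x * h x) = ∫ s in (0 : ℝ)..1, h (x * s) / h x := by
    rw [intervalIntegral.integral_div, ← intervalIntegral.integral_of_le (le_of_lt hx)]
    have hscale := intervalIntegral.mul_integral_comp_mul_left (a := 0) (b := 1) (f := h) x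
    rw [mul_zero, mul_one] at hscale
    rw [← hscale, mul_div_mul_left _ _ (ne_of_gt hx)]
  have hscaled {x : ℝ} (hx : x ∈ Ioi (0 : ℝ)) :
      IntervalIntegrable (fun s ↦ h (x * s) / h x) volume 0 1 := by
    have := ((hii hx).comp_mul_left (c := x)).div_const (h x)
    rwa [zero_div, div_self (ne_of_gt hx)] at this
  intro x hx y hy hxy
  simp only [hratio hx, hratio hy]
  exact intervalIntegral.integral_mono_on_of_le_Ioo zero_le_one (hscaled hx) (hscaled hy)
    fun s hs ↦ hr.monotoneOn_of_le_one hpos hs.1 hs.2.le hx hy hxy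

theorem HasAntitoneDilationRatio.antitoneOn_setIntegral_Ioi_div (hr : HasAntitoneDilationRatio h)
    (hint : IntegrableOn h (Ioi 0)) :
    AntitoneOn (fun x ↦ (∫ y in Ioi x, h y) / (x * h x)) (Ioi 0) := by
  have hratio {x : ℝ} (hx : x ∈ Ioi (0 : ℝ)) :
      (∫ y in Ioi x, h y) / (x * h x) = ∫ s in Ioi (1 : ℝ), h (x * s) / h x := by
    rw [integral_div, integral_comp_mul_left_Ioi _ _ hx, mul_one, smul_eq_mul, inv_mul_eq_div,
      div_div]
  have hscaled {x : ℝ} (hx : x ∈ Ioi (0 : ℝ)) :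
      IntegrableOn (fun s ↦ h (x * s) / h x) (Ioi 1) := by
    have hcomp : IntegrableOn (fun s ↦ h (x * s)) (Ioi 1) :=
      (integrableOn_Ioi_comp_mul_left_iff h 1 hx).2
        (hint.mono_set (Ioi_subset_Ioi (by simpa using le_of_lt hx)))
    exact Integrable.div_const hcomp _
  intro x hx y hy hxy
  simp only [hratio hx, hratio hy]
  exact setIntegral_mono_on (hscaled hy) (hscaled hx) measurableSet_Ioi
    fun s hs ↦ hr (le_of_lt hs) hx hy hxy

theorem HasAntitoneDilationRatio.integrableOn_and_setIntegral_abs_sub_rpow_mul_le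
    (hr : HasAntitoneDilationRatio h) (hcont : ContinuousOn h (Ioi 0))
    (hpos : ∀ x ∈ Ioi 0, 0 < h x) (hint : IntegrableOn h (Ioi 0)) {c k : ℝ} (hc : 0 < c)
    (hhead : ∫ y in Ioc 0 c, h y ≤ k * (c * h c)) (htail : ∫ y in Ioi c, h y ≤ k * (c * h c))
    {p : ℝ} (hp : 1 ≤ p) {φ : ℝ → ℝ} (hφ : ContDiffOn ℝ 1 φ (Ioi 0))
    (hrhs : IntegrableOn (fun x ↦ x ^ p * |deriv φ x| ^ p * h x) (Ioi 0)) :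
    IntegrableOn (fun x ↦ |φ x - φ c| ^ p * h x) (Ioi 0) ∧
      ∫ x in Ioi 0, |φ x - φ c| ^ p * h x ≤
        (p * k) ^ p * ∫ x in Ioi 0, x ^ p * |deriv φ x| ^ p * h x := by
  have hp0 : 0 ≤ p := by linarith
  have hxh {x : ℝ} (hx : 0 < x) : 0 < x * h x := mul_pos hx (hpos x hx)
  have hk : 0 ≤ k := nonneg_of_mul_nonneg_left
    ((setIntegral_nonneg measurableSet_Ioc fun y hy ↦ (hpos y hy.1).le).trans hhead) (hxh hc)
  have hscale : ∀ x ∈ Ioi (0 : ℝ),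
      (k * x * |deriv φ x|) ^ p * h x = k ^ p * (x ^ p * |deriv φ x| ^ p * h x) := fun x hx ↦ by
    have hx0 : 0 ≤ x := le_of_lt hx
    rw [Real.mul_rpow (by positivity) (abs_nonneg _), Real.mul_rpow hk hx0]; ring
  rw [Real.mul_rpow hp0 hk, mul_assoc, ← integral_const_mul (k ^ p),
    ← setIntegral_congr_fun measurableSet_Ioi hscale]
  refine integrableOn_abs_sub_rpow_mul_and_setIntegral_le hp hc
    (fun x hx ↦ ((hφ.differentiableOn one_ne_zero).differentiableAt
      (Ioi_mem_nhds hx)).hasDerivAt)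
    (hφ.continuousOn_deriv_of_isOpen isOpen_Ioi le_rfl) hcont (fun x hx ↦ (hpos x hx).le) hint
    (continuousOn_const.mul continuousOn_id) (fun x hx ↦ mul_nonneg hk (le_of_lt hx))
    (fun x hx ↦ ?_) (fun x hx ↦ ?_)
    ((integrableOn_congr_fun hscale measurableSet_Ioi).2 (hrhs.const_mul _))
  · rw [mul_assoc, ← div_le_iff₀ (hxh hx.1)]
    exact (hr.monotoneOn_setIntegral_Ioc_div hpos hint hx.1 hc hx.2).trans
      ((div_le_iff₀ (hxh hc)).2 hhead)
  · have hx0 : 0 < x := hc.trans_le hx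
    rw [mul_assoc, ← div_le_iff₀ (hxh hx0)]
    exact (hr.antitoneOn_setIntegral_Ioi_div hint hc hx0 hx).trans
      ((div_le_iff₀ (hxh hc)).2 htail)

end DilationRatio

theorem wirtinger_inverse_gamma_general {h : ℝ → ℝ} (hcont : ContinuousOn h (Ioi 0))
    (hpos : ∀ x ∈ Ioi 0, 0 < h x) (hr : HasAntitoneDilationRatio h)
    (hnorm : ∫ x in Ioi (0 : ℝ), h x = 1) {c : ℝ} (hc : 0 < c)
    (hmedian : ∫ y in Ioo 0 c, h y = 1 / 2) {p : ℝ} (hp : 1 ≤ p) {φ : ℝ → ℝ}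
    (hφ : ContDiffOn ℝ 1 φ (Ioi 0))
    (hrhs : IntegrableOn (fun x ↦ x ^ p * |deriv φ x| ^ p * h x) (Ioi 0)) :
    IntegrableOn (fun x ↦ |φ x| ^ p * h x) (Ioi 0) ∧
      ∫ x in Ioi 0, |φ x - ∫ y in Ioi 0, φ y * h y| ^ p * h x ≤
        (p * (1 / (c * h c))) ^ p * ∫ x in Ioi 0, x ^ p * |deriv φ x| ^ p * h x := by
  have hint : IntegrableOn h (Ioi 0) := integrable_of_integral_eq_one hnorm
  have hch : 0 < c * h c := mul_pos hc (hpos c hc)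
  have hhead : ∫ y in Ioc 0 c, h y = 1 / 2 := by rwa [integral_Ioc_eq_integral_Ioo]
  have htail : ∫ y in Ioi c, h y = 1 / 2 := by
    have hsplit := setIntegral_union (Ioc_disjoint_Ioi le_rfl) measurableSet_Ioi
      (hint.mono_set Ioc_subset_Ioi_self) (hint.mono_set (Ioi_subset_Ioi hc.le))
    rw [Ioc_union_Ioi_eq_Ioi hc.le, hnorm, hhead] at hsplit
    linarith
  have hhalf : 1 / 2 = 1 / (2 * (c * h c)) * (c * h c) := by
    rw [← div_div, div_mul_cancel₀ _ hch.ne']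
  obtain ⟨hdev, hardy⟩ := hr.integrableOn_and_setIntegral_abs_sub_rpow_mul_le hcont hpos hint hc
    (hhead.trans hhalf).le (htail.trans hhalf).le hp hφ hrhs
  obtain ⟨hφp, centred⟩ := integrable_and_integral_abs_sub_mean_rpow_mul_le
    (ae_restrict_of_forall_mem measurableSet_Ioi fun x hx ↦ (hpos x hx).le) hnorm
    (hφ.continuousOn.aestronglyMeasurable measurableSet_Ioi) hp (φ c) hdev
  refine ⟨hφp, centred.trans ((mul_le_mul_of_nonneg_left hardy (by positivity)).trans_eq ?_)⟩
  rw [← mul_assoc, ← Real.mul_rpow zero_le_two (by positivity)]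
  congr 2
  ring

section InverseGamma

/-- The inverse Gamma density `h_{β,m}` of the paper. The constant `C` is a free parameter, to be
pinned down by requiring total mass `1` on `(0, ∞)`; only the values at `x > 0` are meaningful. -/
noncomputable def inverseGammaDensity (C β m x : ℝ) : ℝ :=
  C * x ^ (-(2 * β)) * Real.exp (-m / x)

variable {C β m : ℝ}

theorem inverseGammaDensity_pos (hC : 0 < C) {x : ℝ} (hx : 0 < x) :
    0 < inverseGammaDensity C β m x := by
  unfold inverseGammaDensity; positivity

theorem continuousOn_inverseGammaDensity : ContinuousOn (inverseGammaDensity C β m) (Ioi 0) := by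
  have hne : ∀ x ∈ Ioi (0 : ℝ), x ≠ 0 := fun x hx ↦ ne_of_gt hx
  exact (continuousOn_const.mul (continuousOn_id.rpow_const fun x hx ↦ Or.inl (hne x hx))).mul
    (continuousOn_const.div continuousOn_id hne).rexp

theorem inverseGammaDensity_mul_div (hC : C ≠ 0) {x s : ℝ} (hx : 0 < x) (hs : 0 < s) :
    inverseGammaDensity C β m (x * s) / inverseGammaDensity C β m x =
      s ^ (-(2 * β)) * Real.exp (m * (1 - s⁻¹) / x) := by
  have hexp : Real.exp (-m / (x * s)) = Real.exp (m * (1 - s⁻¹) / x) * Real.exp (-m / x) := by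
    rw [← Real.exp_add]; congr 1; field_simp; ring
  rw [inverseGammaDensity, inverseGammaDensity, Real.mul_rpow hx.le hs.le, hexp]
  field_simp

theorem hasAntitoneDilationRatio_inverseGammaDensity (hC : C ≠ 0) (hm : 0 ≤ m) :
    HasAntitoneDilationRatio (inverseGammaDensity C β m) := fun s hs x hx y hy hxy ↦ by
  have hs0 : 0 < s := zero_lt_one.trans_le hs
  have hx0 : 0 < x := hx
  have hms : 0 ≤ m * (1 - s⁻¹) := mul_nonneg hm (sub_nonneg.2 (inv_le_one_of_one_le₀ hs))
  simp only [inverseGammaDensity_mul_div hC hx hs0, inverseGammaDensity_mul_div hC hy hs0]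
  gcongr

end InverseGamma

/-- **Wirtinger inequality with weight for inverse Gamma densities**
(Theorem 4.3). Let `β > 1/2`, `m > 0`, let `X` have the inverse Gamma density
`h_{β,m}(x) = C_{β,m} x^{−2β} e^{−m/x}` on `ℝ₊`, and let `xbar` be the median of
`X` (`H_{β,m}(xbar) = 1/2` where `H_{β,m}(x) = ∫_0^x h_{β,m}`). Then for every
`1 ≤ p < ∞` and every smooth `φ` on `ℝ₊` with `E[|φ(X)|^p]` finite,
`E[|φ(X) − E[φ(X)]|^p] ≤ (p D(β,m))^p E[X^p |φ'(X)|^p]`, where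
`D(β,m) = 1/(xbar · h_{β,m}(xbar))` (whenever the right-hand side is finite). -/
theorem wirtinger_inverse_gamma
    (β m : ℝ) (hβ : 1 / 2 < β) (hm : 0 < m)
    (C : ℝ) (hC : 0 < C)
    (h : ℝ → ℝ) (hdef : ∀ x, h x = C * x ^ (-(2 * β)) * Real.exp (-m / x))
    (hnorm : ∫ x in Ioi (0 : ℝ), h x = 1)
    (H : ℝ → ℝ) (hH : ∀ x, H x = ∫ y in Ioo (0 : ℝ) x, h y)
    (xbar : ℝ) (hxbar : 0 < xbar) (hmedian : H xbar = 1 / 2)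
    (p : ℝ) (hp : 1 ≤ p)
    (φ : ℝ → ℝ) (hφ : ContDiffOn ℝ (⊤ : ℕ∞) φ (Ioi 0))
    (hlhs : IntegrableOn (fun x => |φ x| ^ p * h x) (Ioi 0))
    (hrhs : IntegrableOn (fun x => x ^ p * |deriv φ x| ^ p * h x) (Ioi 0)) :
    (∫ x in Ioi (0 : ℝ), |φ x - ∫ y in Ioi (0 : ℝ), φ y * h y| ^ p * h x)
      ≤ (p * (1 / (xbar * h xbar))) ^ p *
          ∫ x in Ioi (0 : ℝ), x ^ p * |deriv φ x| ^ p * h x := by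
  obtain rfl : h = inverseGammaDensity C β m := funext hdef
  exact (wirtinger_inverse_gamma_general continuousOn_inverseGammaDensity
    (fun _ ↦ inverseGammaDensity_pos hC) (hasAntitoneDilationRatio_inverseGammaDensity hC.ne' hm.le)
    hnorm hxbar ((hH xbar).symm.trans hmedian) hp (hφ.of_le (by exact_mod_cast le_top)) hrhs).2
end

section
/- Let β > 1/2, m > 0, let h_{β,m}(x) = C_{β,m} x^{−2β} e^{−m/x} be the inverse Gamma density on ℝ₊ with distribution function H_{β,m}(x) = ∫_0^x h_{β,m}(y) dy, and let x̄ = x̄_{β,m} be its median. Then for every 0 < x ≤ x̄, H_{β,m}(x)/h_{β,m}(x) ≤ x · (1/2)(x̄ · h_{β,m}(x̄))^{−1}, and for every x ≥ x̄, (1 − H_{β,m}(x))/h_{β,m}(x) ≤ x · (1/2)(x̄ · h_{β,m}(x̄))^{−1}. -/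
open MeasureTheory Set

/-!
In the logarithmic variable `u = log x` the logarithm of the inverse Gamma density is the concave
function `log C - 2 β u - m exp (-u)`. For such a density `h` and a fixed `t`, the ratio
`h (x * t) / h x` therefore increases with `x` when `t ≤ 1` and decreases when `1 ≤ t`.
The substitution `y = x * t` writes `H x / (x * h x)` and `(1 - H x) / (x * h x)` as the integrals
of this ratio over `t ∈ (0, 1)` and over `t ∈ (1, ∞)`, so the former increases and the
latter decreases with `x`; comparing with the value at the median gives the bounds.
-/

lemma map_add_map_le_of_concaveOn {𝕜 β : Type*} [Field 𝕜] [LinearOrder 𝕜] [IsStrictOrderedRing 𝕜]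
    [AddCommGroup β] [PartialOrder β] [IsOrderedAddMonoid β] [Module 𝕜 β]
    {s : Set 𝕜} {f : 𝕜 → β} (hf : ConcaveOn 𝕜 s f) {w x y z : 𝕜} (hw : w ∈ s) (hz : z ∈ s)
    (hwx : w ≤ x) (hxz : x ≤ z) (hsum : w + z = x + y) :
    f w + f z ≤ f x + f y := by
  obtain ⟨a, b, ha, hb, hab, hx⟩ : x ∈ segment 𝕜 w z := by
    rw [segment_eq_Icc (hwx.trans hxz)]
    exact ⟨hwx, hxz⟩
  have hba : b + a = 1 := by rw [add_comm, hab]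
  have hy : b • w + a • z = y := by
    simp only [smul_eq_mul] at hx ⊢
    linear_combination hsum - hx + (w + z) * hab
  calc f w + f z = (a • f w + b • f z) + (b • f w + a • f z) := by
        rw [add_add_add_comm, ← add_smul, ← add_smul, hab, hba, one_smul, one_smul]
    _ ≤ f x + f y := by
        rw [← hx, ← hy]
        exact add_le_add (hf.2 hw hz ha hb hab) (hf.2 hw hz hb ha hba)

section SetScaling

open scoped Pointwise

lemma integrableOn_comp_mul_left {E : Type*} [NormedAddCommGroup E] {f : ℝ → E}
    {c : ℝ} (hc : c ≠ 0) {s : Set ℝ} (hs : MeasurableSet s)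
    (hf : IntegrableOn f (c • s)) : IntegrableOn (fun t ↦ f (c * t)) s := by
  have hmem (t : ℝ) : c * t ∈ c • s ↔ t ∈ s := smul_mem_smul_set_iff₀ hc s t
  have hf' : Integrable (fun t ↦ (c • s).indicator f (c • t)) :=
    ((integrable_indicator_iff (hs.const_smul₀ c)).2 hf).comp_smul hc
  rw [← integrable_indicator_iff hs]
  refine hf'.congr (.of_forall fun t ↦ ?_)
  classical simp only [indicator_apply, smul_eq_mul, hmem t]

lemma setIntegral_smul_set_div_le {f : ℝ → ℝ} {s : Set ℝ} (hs : MeasurableSet s) {x y : ℝ}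
    (hx : 0 < x) (hy : 0 < y) (hfx : 0 < f x) (hfy : 0 < f y)
    (hintx : IntegrableOn f (x • s)) (hinty : IntegrableOn f (y • s))
    (hle : ∀ t ∈ s, f (x * t) * f y ≤ f x * f (y * t)) :
    (∫ z in x • s, f z) / (x * f x) ≤ (∫ z in y • s, f z) / (y * f y) := by
  have substitution {c : ℝ} (hc : 0 < c) :
      (∫ z in c • s, f z) / (c * f c) = (∫ t in s, f (c * t)) / f c := by
    have h := Measure.setIntegral_comp_smul_of_pos volume f s hc
    simp only [smul_eq_mul, Module.finrank_self, pow_one] at h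
    rw [h, ← div_div, inv_mul_eq_div]
  rw [substitution hx, substitution hy, div_le_div_iff₀ hfx hfy, ← integral_mul_const,
    mul_comm _ (f x), ← integral_const_mul]
  exact setIntegral_mono_on ((integrableOn_comp_mul_left hx.ne' hs hintx).mul_const _)
    ((integrableOn_comp_mul_left hy.ne' hs hinty).const_mul _) hs hle

end SetScaling

/-- Geometric (or multiplicative) concavity on `(0, ∞)`: `f` is positive there and
`f x ^ a * f y ^ b ≤ f (x ^ a * y ^ b)` for weights `a, b ≥ 0` with `a + b = 1`. It is encoded as
ordinary concavity of `log ∘ f ∘ exp` on `ℝ`, so the values of `f` outside `(0, ∞)` play no role. -/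
structure IsGeometricallyConcave (f : ℝ → ℝ) : Prop where
  pos : ∀ x, 0 < x → 0 < f x
  concaveOn_log_comp_exp : ConcaveOn ℝ univ fun u ↦ Real.log (f (Real.exp u))

namespace IsGeometricallyConcave

variable {f : ℝ → ℝ}

lemma mul_le_mul_of_mul_eq_mul (hf : IsGeometricallyConcave f) {w x y z : ℝ} (hw : 0 < w)
    (hwx : w ≤ x) (hxz : x ≤ z) (hprod : w * z = x * y) :
    f w * f z ≤ f x * f y := by
  have hx : 0 < x := hw.trans_le hwx
  have hz : 0 < z := hx.trans_le hxz
  have hy : 0 < y := pos_of_mul_pos_right (hprod ▸ mul_pos hw hz) hx.le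
  have hlog := map_add_map_le_of_concaveOn hf.concaveOn_log_comp_exp (mem_univ _) (mem_univ _)
    (Real.log_le_log hw hwx) (Real.log_le_log hx hxz)
    (by rw [← Real.log_mul hw.ne' hz.ne', hprod, Real.log_mul hx.ne' hy.ne'])
  have hfw := hf.pos w hw
  have hfx := hf.pos x hx
  have hfy := hf.pos y hy
  have hfz := hf.pos z hz
  simp only [Real.exp_log, hw, hx, hy, hz] at hlog
  rwa [← Real.log_mul hfw.ne' hfz.ne', ← Real.log_mul hfx.ne' hfy.ne',
    Real.log_le_log_iff (mul_pos hfw hfz) (mul_pos hfx hfy)] at hlog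

open scoped Pointwise in
lemma monotoneOn_setIntegral_Ioo_div (hf : IsGeometricallyConcave f)
    (hint : ∀ x, IntegrableOn f (Ioo 0 x)) :
    MonotoneOn (fun x ↦ (∫ z in Ioo 0 x, f z) / (x * f x)) (Ioi 0) := by
  intro x (hx : 0 < x) y (hy : 0 < y) hxy
  have smul_unit {c : ℝ} (hc : 0 < c) : c • Ioo (0 : ℝ) 1 = Ioo 0 c := by
    rw [LinearOrderedField.smul_Ioo hc, mul_zero, mul_one]
  have hle : ∀ t ∈ Ioo (0 : ℝ) 1, f (x * t) * f y ≤ f x * f (y * t) := fun t ht ↦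
    hf.mul_le_mul_of_mul_eq_mul (mul_pos hx ht.1) (mul_le_of_le_one_right hx.le ht.2.le) hxy
      (by ring)
  simpa only [smul_unit hx, smul_unit hy] using
    setIntegral_smul_set_div_le measurableSet_Ioo hx hy (hf.pos x hx) (hf.pos y hy)
      (smul_unit hx ▸ hint x) (smul_unit hy ▸ hint y) hle

open scoped Pointwise in
lemma antitoneOn_setIntegral_Ioi_div (hf : IsGeometricallyConcave f)
    (hint : ∀ x, 0 < x → IntegrableOn f (Ioi x)) :
    AntitoneOn (fun x ↦ (∫ z in Ioi x, f z) / (x * f x)) (Ioi 0) := by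
  intro x (hx : 0 < x) y (hy : 0 < y) hxy
  have smul_Ioi_one {c : ℝ} (hc : 0 < c) : c • Ioi (1 : ℝ) = Ioi c := by
    rw [LinearOrderedField.smul_Ioi hc, mul_one]
  have hle : ∀ t ∈ Ioi (1 : ℝ), f (y * t) * f x ≤ f y * f (x * t) := fun t (ht : 1 < t) ↦ by
    rw [mul_comm]
    exact hf.mul_le_mul_of_mul_eq_mul hx hxy (le_mul_of_one_le_right hy.le ht.le) (by ring)
  simpa only [smul_Ioi_one hx, smul_Ioi_one hy] using
    setIntegral_smul_set_div_le measurableSet_Ioi hy hx (hf.pos y hy) (hf.pos x hx)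
      (smul_Ioi_one hy ▸ hint y hy) (smul_Ioi_one hx ▸ hint x hx) hle

end IsGeometricallyConcave

lemma isGeometricallyConcave_const_mul_rpow_mul_exp_neg_div {C m : ℝ} (hC : 0 < C) (hm : 0 ≤ m)
    (a : ℝ) : IsGeometricallyConcave fun x ↦ C * x ^ a * Real.exp (-m / x) where
  pos x hx := by positivity
  concaveOn_log_comp_exp := by
    have hlog (u : ℝ) : Real.log (C * Real.exp u ^ a * Real.exp (-m / Real.exp u)) =
        Real.log C + a * u - m * Real.exp (-u) := by
      have hpow : Real.exp u ^ a ≠ 0 := by positivity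
      rw [Real.log_mul (mul_ne_zero hC.ne' hpow) (Real.exp_ne_zero _), Real.log_mul hC.ne' hpow,
        Real.log_rpow (Real.exp_pos u), Real.log_exp, Real.log_exp, Real.exp_neg]
      ring
    have hexp : ConvexOn ℝ univ fun u : ℝ ↦ m * Real.exp (-u) :=
      (convexOn_exp.comp_linearMap (-LinearMap.id)).smul hm
    have haffine : ConcaveOn ℝ univ fun u : ℝ ↦ Real.log C + a * u :=
      (concaveOn_const _ convex_univ).add ((LinearMap.mulLeft ℝ a).concaveOn convex_univ)
    simp only [hlog]
    exact haffine.sub hexp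

theorem inverse_gamma_wirtinger_weight_bounds_general
    {h : ℝ → ℝ} (hconc : IsGeometricallyConcave h) (hnorm : ∫ x in Ioi (0 : ℝ), h x = 1)
    {H : ℝ → ℝ} (hH : ∀ x, H x = ∫ y in Ioo (0 : ℝ) x, h y) {a : ℝ} (ha : 0 < a) :
    (∀ x : ℝ, 0 < x → x ≤ a → H x / h x ≤ x * H a * (a * h a)⁻¹) ∧
      (∀ x : ℝ, a ≤ x → (1 - H x) / h x ≤ x * (1 - H a) * (a * h a)⁻¹) := by
  have hint : IntegrableOn h (Ioi 0) := .of_integral_ne_zero (hnorm ▸ one_ne_zero)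
  have htail {x : ℝ} (hx : 0 < x) : 1 - H x = ∫ y in Ioi x, h y := by
    rw [hH, ← hnorm, ← integral_Ioc_eq_integral_Ioo, ← intervalIntegral.integral_of_le hx.le,
      ← intervalIntegral.integral_Ioi_sub_Ioi hint hx.le, sub_sub_cancel]
  have hscale {x p q : ℝ} (hx : 0 < x) (hpq : p / (x * h x) ≤ q / (a * h a)) :
      p / h x ≤ x * q * (a * h a)⁻¹ := by
    rwa [mul_assoc, ← div_le_iff₀' hx, div_div, mul_comm (h x), ← div_eq_mul_inv]
  refine ⟨fun x hx hxa ↦ hscale hx ?_, fun x hax ↦ hscale (ha.trans_le hax) ?_⟩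
  · simpa only [hH] using hconc.monotoneOn_setIntegral_Ioo_div
      (fun _ ↦ hint.mono_set Ioo_subset_Ioi_self) hx ha hxa
  · have hx : 0 < x := ha.trans_le hax
    rw [htail hx, htail ha]
    exact hconc.antitoneOn_setIntegral_Ioi_div
      (fun _ hy ↦ hint.mono_set (Ioi_subset_Ioi hy.le)) ha hx hax

/-- **Bounds on the Wirtinger weight of the inverse Gamma density**
(estimates (4.17)–(4.19)). Let `β > 1/2`, `m > 0`, let
`h_{β,m}(x) = C_{β,m} x^{−2β} e^{−m/x}` be the inverse Gamma density on `ℝ₊`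
with distribution function `H_{β,m}(x) = ∫_0^x h_{β,m}` and median `xbar`
(`H_{β,m}(xbar) = 1/2`). Then for every `0 < x ≤ xbar`,
`H_{β,m}(x)/h_{β,m}(x) ≤ x · (1/2)(xbar · h_{β,m}(xbar))⁻¹`, and for every
`x ≥ xbar`, `(1 − H_{β,m}(x))/h_{β,m}(x) ≤ x · (1/2)(xbar · h_{β,m}(xbar))⁻¹`. -/
theorem inverse_gamma_wirtinger_weight_bounds
    (β m : ℝ) (hβ : 1 / 2 < β) (hm : 0 < m)
    (C : ℝ) (hC : 0 < C)
    (h : ℝ → ℝ) (hdef : ∀ x, h x = C * x ^ (-(2 * β)) * Real.exp (-m / x))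
    (hnorm : ∫ x in Ioi (0 : ℝ), h x = 1)
    (H : ℝ → ℝ) (hH : ∀ x, H x = ∫ y in Ioo (0 : ℝ) x, h y)
    (xbar : ℝ) (hxbar : 0 < xbar) (hmedian : H xbar = 1 / 2) :
    (∀ x : ℝ, 0 < x → x ≤ xbar →
        H x / h x ≤ x * (1 / 2) * (xbar * h xbar)⁻¹) ∧
      (∀ x : ℝ, xbar ≤ x →
        (1 - H x) / h x ≤ x * (1 / 2) * (xbar * h xbar)⁻¹) := by
  obtain rfl : h = fun x ↦ C * x ^ (-(2 * β)) * Real.exp (-m / x) := funext hdef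
  simpa only [hmedian, sub_half] using inverse_gamma_wirtinger_weight_bounds_general
    (isGeometricallyConcave_const_mul_rpow_mul_exp_neg_div hC hm.le _) hnorm hH hxbar
end
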